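/- Let 𝔽_q be a finite field of odd characteristic and let η, K, S be multiplicative characters of 𝔽_q^× such that none of η, Kφ, ηK, ηK̄ is trivial and ηK = S². Then ₃ℙ₂(φ, η, η̄; K, K̄; 1; q) = ( J(ηK, η̄K) / J(φ, K̄) ) · ( J(SK̄, φS̄)² + J(φSK̄, S̄)² ). -/

import Mathlib

/-- Auxiliary to `periodP`: peels off the *first* pair of the list. -/
noncomputable def periodPAux {F : Type*} [Field F] [Fintype F]
    (A₁ : MulChar F ℂ) : List (MulChar F ℂ × MulChar F ℂ) → F → ℂ
  | [], lam => A₁⁻¹ (1 - lam)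
  | p :: rest, lam => ∑ x : F, p.1 x * (p.1⁻¹ * p.2) (1 - x) * periodPAux A₁ rest (lam * x)

/-- `periodP A₁ [(A₂,B₂),…,(Aₙ₊₁,Bₙ₊₁)] λ` is the finite-field period function
`ₙ₊₁ℙₙ(A₁,…,Aₙ₊₁; B₂,…,Bₙ₊₁; λ; q)`: it is defined inductively by
`₁ℙ₀(A₁;λ) = A₁⁻¹(1-λ)` and
`ₙ₊₁ℙₙ(A₁,…,Aₙ₊₁;B₂,…,Bₙ₊₁;λ) = ∑ₓ Aₙ₊₁(x)·(Aₙ₊₁⁻¹Bₙ₊₁)(1-x)·ₙℙₙ₋₁(A₁,…,Aₙ;B₂,…,Bₙ;λx)`,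
the sum being over `x ∈ 𝔽_q`.  (Multiplicative characters are extended by `A(0)=0`,
which is automatic for `MulChar`.) -/
noncomputable def periodP {F : Type*} [Field F] [Fintype F]
    (A₁ : MulChar F ℂ) (l : List (MulChar F ℂ × MulChar F ℂ)) (lam : F) : ℂ :=
  periodPAux A₁ l.reverse lam

/-- The complex-valued quadratic character `φ` of a finite field. -/
noncomputable def quadChar (F : Type*) [Field F] [Fintype F] [DecidableEq F] : MulChar F ℂ :=
  (quadraticChar F).ringHomComp (Int.castRingHom ℂ)


set_option linter.unusedSectionVars false

section helpers
variable {F : Type*} [Field F] [Fintype F] [DecidableEq F]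

@[simp] lemma mc_zero (χ : MulChar F ℂ) : χ 0 = 0 := MulChar.map_zero χ

lemma qc_ne_one (hodd : ringChar F ≠ 2) : quadChar F ≠ 1 := by
  intro h
  apply quadraticChar_ne_one hodd
  ext a
  have := congrArg (fun χ : MulChar F ℂ => χ (a : F)) h
  simp [quadChar, MulChar.ringHomComp_apply] at this
  simpa using this

lemma qc_quad : (quadChar F).IsQuadratic :=
  (quadraticChar_isQuadratic F).comp _

lemma qc_inv : (quadChar F)⁻¹ = quadChar F := qc_quad.inv

lemma qc_sq : quadChar F * quadChar F = 1 := by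
  rw [← sq]; exact qc_quad.sq_eq_one

lemma qc_apply_sq {a : F} (ha : a ≠ 0) : quadChar F (a ^ 2) = 1 := by
  rw [map_pow, ← MulChar.pow_apply' _ two_ne_zero, qc_quad.sq_eq_one,
    MulChar.one_apply (isUnit_iff_ne_zero.mpr ha)]

lemma qc_mul_self {a : F} (ha : a ≠ 0) : quadChar F a * quadChar F a = 1 := by
  rw [← map_mul, ← sq, qc_apply_sq ha]

lemma sum_sq (hodd : ringChar F ≠ 2) (f : F → ℂ) :
    ∑ w : F, f (w ^ 2) = ∑ t : F, (1 + quadChar F t) * f t := by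
  rw [← Finset.sum_fiberwise' (s := Finset.univ) (g := fun w : F => w ^ 2) (f := f)]
  refine Finset.sum_congr rfl fun t _ => ?_
  rw [Finset.sum_const, nsmul_eq_mul]
  congr 1
  have h := quadraticChar_card_sqrts hodd t
  have h' : (({x : F | x ^ 2 = t}.toFinset.card : ℤ) : ℂ) = quadChar F t + 1 := by
    rw [h]; simp [quadChar, MulChar.ringHomComp_apply]
  rw [add_comm, ← h']
  simp

lemma eq_one_or_qc (hodd : ringChar F ≠ 2) {χ : MulChar F ℂ} (h : χ * χ = 1) :
    χ = 1 ∨ χ = quadChar F := by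
  obtain ⟨g, hg⟩ := IsCyclic.exists_generator (α := Fˣ)
  have key : ∀ χ : MulChar F ℂ, χ * χ = 1 → χ ≠ 1 → χ g = -1 := by
    intro χ h h1
    have h2 : χ g * χ g = 1 := by
      rw [← MulChar.mul_apply, h, MulChar.one_apply g.isUnit]
    rcases mul_self_eq_one_iff.mp h2 with h3 | h3
    · exact absurd ((MulChar.eq_iff hg χ 1).mpr (by rw [h3, MulChar.one_apply g.isUnit])) h1
    · exact h3
  by_cases h1 : χ = 1
  · exact Or.inl h1
  · right
    rw [MulChar.eq_iff hg, key χ h h1, key _ qc_sq (qc_ne_one hodd)]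

lemma two_ne (hodd : ringChar F ≠ 2) : (2 : F) ≠ 0 := Ring.two_ne_zero hodd

lemma four_ne (hodd : ringChar F ≠ 2) : (4 : F) ≠ 0 := by
  have := mul_ne_zero (two_ne hodd) (two_ne hodd)
  norm_num at this; exact this

/-- J(A,A) A(4) = J(A,φ). -/
lemma jac_dup (hodd : ringChar F ≠ 2) {A : MulChar F ℂ} (hA : A ≠ 1) :
    A 4 * jacobiSum A A = jacobiSum A (quadChar F) := by
  have h2 := two_ne hodd
  have h1 : A 4 * jacobiSum A A = ∑ w : F, A (1 - w ^ 2) := by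
    rw [jacobiSum, Finset.mul_sum]
    refine Finset.sum_nbij' (fun t => 1 - 2 * t) (fun w => (1 - w) / 2) ?_ ?_ ?_ ?_ ?_
    · simp
    · simp
    · intro t _; field_simp; ring
    · intro t _; field_simp; ring
    · intro t _
      rw [← map_mul, ← map_mul]; congr 1; ring
  rw [h1, sum_sq hodd (fun t => A (1 - t))]
  simp_rw [add_mul, one_mul]
  rw [Finset.sum_add_distrib, jacobiSum_comm, jacobiSum]
  have : ∑ t : F, A (1 - t) = 0 := by
    rw [← MulChar.sum_eq_zero_of_ne_one hA]
    exact (Equiv.subLeft (1 : F)).sum_comp (fun t => A t)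
  rw [this, zero_add]

lemma g_ne {ψ : AddChar F ℂ} (hψ : ψ.IsPrimitive) (χ : MulChar F ℂ) : gaussSum χ ψ ≠ 0 := by
  by_cases h : χ = 1
  · subst h
    rw [gaussSum_one_left]
    · norm_num
    · have := hψ (one_ne_zero (α := F))
      simpa [AddChar.mulShift_one] using this
  · exact gaussSum_ne_zero_of_nontrivial (by simp) h hψ

lemma g_refl {ψ : AddChar F ℂ} (hψ : ψ.IsPrimitive) {χ : MulChar F ℂ} (h : χ ≠ 1) :
    (gaussSum χ ψ * gaussSum χ⁻¹ ψ) ^ 2 = (Fintype.card F : ℂ) ^ 2 := by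
  rw [← gaussSum_mul_gaussSum_eq_card h hψ, ← mul_gaussSum_inv_eq_gaussSum χ⁻¹ ψ]
  have : (χ⁻¹ (-1)) ^ 2 = 1 := by
    rw [← map_pow]; simp
  linear_combination (gaussSum χ ψ * gaussSum χ⁻¹ ψ⁻¹) ^ 2 * this

lemma g_dup (hodd : ringChar F ≠ 2) {ψ : AddChar F ℂ} (hψ : ψ.IsPrimitive) (A : MulChar F ℂ) :
    A 4 * (gaussSum A ψ * gaussSum (A * quadChar F) ψ)
      = gaussSum (A * A) ψ * gaussSum (quadChar F) ψ := by
  have h4 : (4 : F) = 2 ^ 2 := by norm_num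
  by_cases h : A * A = 1
  · rcases eq_one_or_qc hodd h with rfl | rfl
    · rw [MulChar.one_apply (isUnit_iff_ne_zero.mpr (four_ne hodd))]; simp
    · rw [h4, qc_apply_sq (two_ne hodd)]; simp [qc_sq, mul_comm]
  · have hA : A ≠ 1 := by rintro rfl; simp at h
    have hA' : A * quadChar F ≠ 1 := by
      intro h'
      apply h
      have : A = quadChar F := by
        rw [← qc_inv]; exact eq_inv_of_mul_eq_one_left h'
      rw [this, qc_sq]
    have e1 := jacobiSum_mul_nontrivial h ψ
    have e2 := jacobiSum_mul_nontrivial hA' ψ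
    have e3 := jac_dup hodd hA
    rw [← e3] at e2
    apply mul_left_cancel₀ (g_ne hψ A)
    linear_combination (-A 4 * gaussSum (A * quadChar F) ψ) * e1 + gaussSum (A * A) ψ * e2

end helpers

section helpers2
variable {F : Type*} [Field F] [Fintype F] [DecidableEq F]
lemma jac_inv (χ ω : MulChar F ℂ) : jacobiSum χ ω = χ (-1) * jacobiSum χ (χ * ω)⁻¹ := by
  rw [jacobiSum_eq_sum_sdiff, jacobiSum_eq_sum_sdiff, Finset.mul_sum]
  have hm : ∀ a ∈ (Finset.univ \ {0, 1} : Finset F),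
      a / (a - 1) ∈ (Finset.univ \ {0, 1} : Finset F) := by
    intro a ha
    simp only [Finset.mem_sdiff, Finset.mem_univ, Finset.mem_insert, Finset.mem_singleton,
      true_and, not_or] at ha ⊢
    have h1 : a - 1 ≠ 0 := sub_ne_zero.mpr ha.2
    refine ⟨div_ne_zero ha.1 h1, fun h => ?_⟩
    rw [div_eq_one_iff_eq h1] at h
    have : (1 : F) = 0 := by linear_combination h
    exact one_ne_zero this
  have hi : ∀ a ∈ (Finset.univ \ {0, 1} : Finset F),
      (a / (a - 1)) / (a / (a - 1) - 1) = a := by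
    intro a ha
    simp only [Finset.mem_sdiff, Finset.mem_univ, Finset.mem_insert, Finset.mem_singleton,
      true_and, not_or] at ha
    have h1 : a - 1 ≠ 0 := sub_ne_zero.mpr ha.2
    have : a / (a - 1) - 1 = 1 / (a - 1) := by field_simp; ring
    rw [this]; field_simp
  refine Finset.sum_nbij' (fun t => t / (t - 1)) (fun t => t / (t - 1)) hm hm hi hi ?_
  intro a ha
  simp only [Finset.mem_sdiff, Finset.mem_univ, Finset.mem_insert, Finset.mem_singleton,
      true_and, not_or] at ha
  have h1 : a - 1 ≠ 0 := sub_ne_zero.mpr ha.2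
  have h2 : 1 - a ≠ 0 := sub_ne_zero.mpr (Ne.symm ha.2)
  have e1 : (1 - a / (a - 1))⁻¹ = 1 - a := by
    have : 1 - a / (a - 1) = (1 - a)⁻¹ := by
      rw [eq_comm, inv_eq_iff_eq_inv, eq_comm, inv_eq_iff_eq_inv]
      rw [← neg_sub 1 a]; field_simp; ring
    rw [this, inv_inv]
  rw [MulChar.inv_apply', e1, MulChar.mul_apply, ← mul_assoc, ← mul_assoc, ← map_mul, ← map_mul]
  congr 2
  rw [← neg_sub 1 a]; field_simp

/-- P = T -/
lemma P_eq_T (hodd : ringChar F ≠ 2) (η K : MulChar F ℂ) (hη : η ≠ 1)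
    (hKφ : K * quadChar F ≠ 1) :
    periodP (quadChar F) [(η, K), (η⁻¹, K⁻¹)] 1
      = ∑ z : F, ∑ w : F, η z * (η * K⁻¹) w * quadChar F (1 - z) * quadChar F (1 - z * w ^ 2) := by
  set φ := quadChar F with hφ
  have eP : periodP φ [(η, K), (η⁻¹, K⁻¹)] 1 = ∑ p : F × F,
      (η⁻¹ p.1 * (η * K⁻¹) (1 - p.1)) * (η p.2 * (η⁻¹ * K) (1 - p.2) * φ (1 - p.1 * p.2)) := by
    rw [Fintype.sum_prod_type]
    simp [periodP, periodPAux, Finset.mul_sum, hφ, qc_inv]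
  rw [eP]
  rw [← Fintype.sum_prod_type (f := fun p : F × F =>
    η p.1 * (η * K⁻¹) p.2 * φ (1 - p.1) * φ (1 - p.1 * p.2 ^ 2))]
  set p : F × F → ℂ := fun p => 
      (η⁻¹ p.1 * (η * K⁻¹) (1 - p.1)) * (η p.2 * (η⁻¹ * K) (1 - p.2) * φ (1 - p.1 * p.2)) with hp
  set t : F × F → ℂ := fun p =>
    η p.1 * (η * K⁻¹) p.2 * φ (1 - p.1) * φ (1 - p.1 * p.2 ^ 2) with ht
  have φ0 : φ 0 = 0 := MulChar.map_zero _
  -- diagonal of p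
  have dP : ∑ x : F, p (x, x) = - φ (-1) - 1 := by
    have e1 : ∀ x : F, p (x, x) = φ (1 - x ^ 2) - if x = 0 then 1 else 0 := by
      intro x
      simp only [hp]
      by_cases hx : x = 0
      · subst hx; simp
      by_cases hx1 : x = 1
      · subst hx1; simp
      have hx1' : 1 - x ≠ 0 := sub_ne_zero.mpr (Ne.symm hx1)
      have a1 : η⁻¹ x * η x = 1 := by
        rw [← MulChar.mul_apply, inv_mul_cancel, MulChar.one_apply (isUnit_iff_ne_zero.mpr hx)]
      have a2 : (η * K⁻¹) (1 - x) * (η⁻¹ * K) (1 - x) = 1 := by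
        rw [← MulChar.mul_apply, show η * K⁻¹ * (η⁻¹ * K) = 1 by
          rw [mul_mul_mul_comm]; simp, MulChar.one_apply (isUnit_iff_ne_zero.mpr hx1')]
      rw [if_neg hx, sq]
      linear_combination (φ (1 - x * x)) * ((η * K⁻¹) (1 - x) * (η⁻¹ * K) (1 - x)) * a1
        + φ (1 - x * x) * a2
    simp_rw [e1]
    rw [Finset.sum_sub_distrib, sum_sq hodd (fun t => φ (1 - t))]
    simp_rw [add_mul, one_mul]
    rw [Finset.sum_add_distrib]
    have z1 : ∑ t : F, φ (1 - t) = 0 := by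
      rw [← MulChar.sum_eq_zero_of_ne_one (qc_ne_one hodd)]
      exact (Equiv.subLeft (1 : F)).sum_comp (fun t => φ t)
    have z2 : ∑ t : F, φ t * φ (1 - t) = - φ (-1) := by
      have := jacobiSum_nontrivial_inv (qc_ne_one hodd)
      rw [qc_inv] at this
      exact this
    rw [z1, z2]; simp
  have d1 : ∑ z : F, t (z, 1) = -1 := by
    have e1 : ∀ z : F, t (z, 1) = η z - if z = 1 then 1 else 0 := by
      intro z
      simp only [ht]
      by_cases hz : z = 1
      · subst hz; simp
      have hz' : 1 - z ≠ 0 := sub_ne_zero.mpr (Ne.symm hz)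
      have := qc_mul_self hz'
      rw [if_neg hz]; simp only [map_one, one_pow, mul_one]
      rw [mul_assoc, this]; simp
    simp_rw [e1]
    rw [Finset.sum_sub_distrib, MulChar.sum_eq_zero_of_ne_one hη]; simp
  have d2 : ∑ z : F, t (z, z⁻¹) = - φ (-1) := by
    have e1 : ∀ z : F, t (z, z⁻¹) = φ (-1) * ((K * φ) z - if z = 1 then 1 else 0) := by
      intro z
      simp only [ht]
      by_cases hz : z = 1
      · subst hz; simp
      by_cases hz0 : z = 0
      · subst hz0; simp
      have hz' : 1 - z ≠ 0 := sub_ne_zero.mpr (Ne.symm hz)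
      rw [if_neg hz, sub_zero]
      have a1 : η z * (η * K⁻¹) z⁻¹ = K z := by
        rw [← MulChar.inv_apply', ← MulChar.mul_apply]; congr 1; simp
      have a2 : φ (1 - z) * φ (1 - z * z⁻¹ ^ 2) = φ (-1) * φ z := by
        rw [← map_mul, show (1 - z) * (1 - z * z⁻¹ ^ 2) = (-1 * z) * ((1 - z) / z) ^ 2 by
          field_simp; ring, map_mul, qc_apply_sq (div_ne_zero hz' hz0), mul_one, map_mul]
      rw [mul_assoc, a1, a2, MulChar.mul_apply]; ring
    simp_rw [e1]
    rw [← Finset.mul_sum, Finset.sum_sub_distrib, MulChar.sum_eq_zero_of_ne_one hKφ]; simp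
  -- split p
  have sP : ∑ q : F × F, p q = ∑ q ∈ {q : F × F | q.1 ≠ 0 ∧ q.1 ≠ 1 ∧ q.2 ≠ 0 ∧ q.2 ≠ 1 ∧ q.1 ≠ q.2}, p q
      + ∑ x : F, p (x, x) := by
    rw [Finset.sum_filter, Fintype.sum_prod_type, Fintype.sum_prod_type, ← Finset.sum_add_distrib]
    refine Finset.sum_congr rfl fun x _ => ?_
    have : p (x, x) = ∑ y : F, if y = x then p (x, y) else 0 := by simp
    rw [this, ← Finset.sum_add_distrib]
    refine Finset.sum_congr rfl fun y _ => ?_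
    by_cases h : y = x
    · simp [h]
    by_cases h0 : x = 0
    · simp [h0, hp]
    by_cases h1 : x = 1
    · simp [h1, hp]
    by_cases h2 : y = 0
    · simp [h2, hp]
    by_cases h3 : y = 1
    · simp [h3, hp]
    simp [h, h0, h1, h2, h3, Ne.symm h]
  have sT : ∑ q : F × F, t q = ∑ q ∈ {q : F × F | q.1 ≠ 0 ∧ q.1 ≠ 1 ∧ q.2 ≠ 0 ∧ q.2 ≠ 1 ∧ q.1 * q.2 ≠ 1}, t q
      + ∑ z : F, t (z, 1) + ∑ z : F, t (z, z⁻¹) := by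
    rw [Finset.sum_filter, Fintype.sum_prod_type, Fintype.sum_prod_type, ← Finset.sum_add_distrib,
      ← Finset.sum_add_distrib]
    refine Finset.sum_congr rfl fun x _ => ?_
    have e1 : t (x, 1) = ∑ y : F, if y = 1 then t (x, y) else 0 := by simp
    have e2 : t (x, x⁻¹) = ∑ y : F, if y = x⁻¹ then t (x, y) else 0 := by simp
    rw [e1, e2, ← Finset.sum_add_distrib, ← Finset.sum_add_distrib]
    refine Finset.sum_congr rfl fun y _ => ?_
    by_cases h0 : x = 0
    · simp [h0, ht]
    by_cases h1 : x = 1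
    · simp [h1, ht]
    by_cases h2 : y = 0
    · simp [h2, ht]
    by_cases h3 : y = 1
    · have : ¬ (1 = x⁻¹) := fun h => h1 (inv_eq_one.mp h.symm)
      simp [h3, this]
    by_cases h4 : y = x⁻¹
    · have : x⁻¹ ≠ 1 := fun h => h1 (inv_eq_one.mp h)
      subst h4
      simp [h0, this]
    have : x * y ≠ 1 := fun h => h4 (eq_inv_of_mul_eq_one_right h)
    simp [h0, h1, h2, h3, h4, this]
  have main : ∑ q ∈ {q : F × F | q.1 ≠ 0 ∧ q.1 ≠ 1 ∧ q.2 ≠ 0 ∧ q.2 ≠ 1 ∧ q.1 ≠ q.2}, p q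
      = ∑ q ∈ {q : F × F | q.1 ≠ 0 ∧ q.1 ≠ 1 ∧ q.2 ≠ 0 ∧ q.2 ≠ 1 ∧ q.1 * q.2 ≠ 1}, t q := by
    refine Finset.sum_nbij' (fun q => (q.2 / q.1, (1 - q.1) / (1 - q.2)))
      (fun q => ((q.2 - 1) / (q.1 * q.2 - 1), q.1 * (q.2 - 1) / (q.1 * q.2 - 1))) ?_ ?_ ?_ ?_ ?_
    · rintro ⟨x, y⟩ h
      simp only [Finset.mem_filter, Finset.mem_univ, true_and] at h ⊢
      obtain ⟨h0, h1, h2, h3, h4⟩ := h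
      have h1' : 1 - x ≠ 0 := sub_ne_zero.mpr (Ne.symm h1)
      have h3' : 1 - y ≠ 0 := sub_ne_zero.mpr (Ne.symm h3)
      refine ⟨div_ne_zero h2 h0, ?_, div_ne_zero h1' h3', ?_, ?_⟩
      · rw [Ne, div_eq_one_iff_eq h0]; exact Ne.symm h4
      · rw [Ne, div_eq_one_iff_eq h3']; intro h; apply h4; linear_combination -h
      · rw [div_mul_div_comm, Ne, div_eq_one_iff_eq (mul_ne_zero h0 h3')]
        intro h; apply h4; linear_combination -h
    · rintro ⟨z, w⟩ h
      simp only [Finset.mem_filter, Finset.mem_univ, true_and] at h ⊢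
      obtain ⟨h0, h1, h2, h3, h4⟩ := h
      have h1' : z - 1 ≠ 0 := sub_ne_zero.mpr h1
      have h3' : w - 1 ≠ 0 := sub_ne_zero.mpr h3
      have h4' : z * w - 1 ≠ 0 := sub_ne_zero.mpr h4
      refine ⟨div_ne_zero h3' h4', ?_, div_ne_zero (mul_ne_zero h0 h3') h4', ?_, ?_⟩
      · rw [Ne, div_eq_one_iff_eq h4']; intro h
        apply mul_ne_zero h1' h2; linear_combination -h
      · rw [Ne, div_eq_one_iff_eq h4']; intro h
        apply h1'; linear_combination -h
      · rw [Ne, div_left_inj' h4']; intro h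
        apply mul_ne_zero h1' h3'; linear_combination -h
    · rintro ⟨x, y⟩ h
      simp only [Finset.mem_filter, Finset.mem_univ, true_and] at h ⊢
      obtain ⟨h0, h1, h2, h3, h4⟩ := h
      have h3' : 1 - y ≠ 0 := sub_ne_zero.mpr (Ne.symm h3)
      have h4' : y - x ≠ 0 := sub_ne_zero.mpr (Ne.symm h4)
      have e1 : (1 - x) / (1 - y) - 1 = (y - x) / (1 - y) := by field_simp; ring
      have e2 : y / x * ((1 - x) / (1 - y)) - 1 = (y - x) / (x * (1 - y)) := by field_simp; ring
      rw [e1, e2]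
      ext <;> simp only <;> field_simp
    · rintro ⟨z, w⟩ h
      simp only [Finset.mem_filter, Finset.mem_univ, true_and] at h ⊢
      obtain ⟨h0, h1, h2, h3, h4⟩ := h
      have h1' : z - 1 ≠ 0 := sub_ne_zero.mpr h1
      have h3' : w - 1 ≠ 0 := sub_ne_zero.mpr h3
      have h4' : z * w - 1 ≠ 0 := sub_ne_zero.mpr h4
      have h4'' : w * z - 1 ≠ 0 := by rw [mul_comm]; exact h4'
      have e1 : 1 - (w - 1) / (z * w - 1) = w * (z - 1) / (z * w - 1) := by field_simp; ring
      have e2 : 1 - z * (w - 1) / (z * w - 1) = (z - 1) / (z * w - 1) := by field_simp; ring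
      rw [e1, e2]
      ext <;> simp only <;> field_simp
    · rintro ⟨x, y⟩ h
      simp only [Finset.mem_filter, Finset.mem_univ, true_and] at h
      obtain ⟨h0, h1, h2, h3, h4⟩ := h
      have h1' : 1 - x ≠ 0 := sub_ne_zero.mpr (Ne.symm h1)
      have h3' : 1 - y ≠ 0 := sub_ne_zero.mpr (Ne.symm h3)
      have h4' : x - y ≠ 0 := sub_ne_zero.mpr h4
      simp only [hp, ht]
      have a1 : η (y / x) = η⁻¹ x * η y := by
        rw [MulChar.inv_apply', ← map_mul]; congr 1; field_simp
      have a2 : (η * K⁻¹) ((1 - x) / (1 - y)) = (η * K⁻¹) (1 - x) * (η⁻¹ * K) (1 - y) := by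
        rw [show η⁻¹ * K = (η * K⁻¹)⁻¹ by simp [mul_comm], MulChar.inv_apply', ← map_mul, div_eq_mul_inv]
      have a3 : φ (1 - y / x) * φ (1 - y / x * ((1 - x) / (1 - y)) ^ 2) = φ (1 - x * y) := by
        rw [← map_mul, show (1 - y / x) * (1 - y / x * ((1 - x) / (1 - y)) ^ 2)
          = (1 - x * y) * ((x - y) / (x * (1 - y))) ^ 2 by field_simp; ring, map_mul,
          qc_apply_sq (div_ne_zero h4' (mul_ne_zero h0 h3')), mul_one]
      rw [mul_assoc (η (y / x) * _), a1, a2, a3]; ring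
  rw [sP, sT, main, dP, d1, d2]; ring

lemma T_eq (hodd : ringChar F ≠ 2) (η K S : MulChar F ℂ) (hS : η * K = S ^ 2) :
    ∑ z : F, ∑ w : F, η z * (η * K⁻¹) w * quadChar F (1 - z) * quadChar F (1 - z * w ^ 2)
      = jacobiSum S (quadChar F) * jacobiSum (S * K⁻¹) (quadChar F)
        + jacobiSum (S * quadChar F) (quadChar F)
          * jacobiSum (S * quadChar F * K⁻¹) (quadChar F) := by
  set φ := quadChar F with hφ
  have hη : η = S * (S * K⁻¹) := by rw [← mul_assoc, ← sq, ← hS]; simp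
  have hA : ∀ w, (η * K⁻¹) w = (S * K⁻¹) (w ^ 2) := by
    intro w; rw [map_pow, ← MulChar.pow_apply' _ two_ne_zero, hη, sq]
    congr 1; exact mul_right_comm _ _ _
  have key : ∀ B : MulChar F ℂ, ∀ z : F, z ≠ 0 →
      ∑ t, B t * φ (1 - z * t) = B⁻¹ z * jacobiSum B φ := by
    intro B z hz
    rw [jacobiSum, Finset.mul_sum]
    rw [← Equiv.sum_comp (Equiv.mulLeft₀ z hz) (fun t => B⁻¹ z * (B t * φ (1 - t)))]
    refine Finset.sum_congr rfl fun t _ => ?_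
    change _ = B⁻¹ z * (B (z * t) * φ (1 - z * t))
    rw [MulChar.inv_apply', ← mul_assoc, ← map_mul, inv_mul_cancel_left₀ hz]
  have inner : ∀ z : F, ∑ w : F, η z * (η * K⁻¹) w * φ (1 - z) * φ (1 - z * w ^ 2)
      = S z * φ (1 - z) * jacobiSum (S * K⁻¹) φ
        + (S * φ) z * φ (1 - z) * jacobiSum (S * φ * K⁻¹) φ := by
    intro z
    by_cases hz : z = 0
    · subst hz; simp
    simp_rw [hA]
    refine (sum_sq hodd (fun u => η z * (S * K⁻¹) u * φ (1 - z) * φ (1 - z * u))).trans ?_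
    have e : ∀ u : F, (1 + φ u) * (η z * (S * K⁻¹) u * φ (1 - z) * φ (1 - z * u))
        = η z * φ (1 - z) * ((S * K⁻¹) u * φ (1 - z * u))
          + η z * φ (1 - z) * ((S * φ * K⁻¹) u * φ (1 - z * u)) := by
      intro u; simp only [MulChar.mul_apply]; ring
    have hφ2 : φ * φ = 1 := qc_sq
    have b1 : η z * (S * K⁻¹)⁻¹ z = S z := by
      rw [← MulChar.mul_apply, hη]; congr 1; exact mul_inv_cancel_right _ _
    have b2 : η z * (S * φ * K⁻¹)⁻¹ z = (S * φ) z := by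
      rw [← MulChar.mul_apply, hη]; congr 1
      rw [mul_inv_eq_iff_eq_mul]
      calc S * (S * K⁻¹) = S * (S * K⁻¹) * (φ * φ) := by rw [hφ2, mul_one]
        _ = _ := by ac_rfl
    refine (Finset.sum_congr rfl fun u _ => e u).trans ?_
    rw [Finset.sum_add_distrib, ← Finset.mul_sum, ← Finset.mul_sum, key _ z hz, key _ z hz,
      ← b1, ← b2]
    ring
  simp_rw [inner]
  rw [Finset.sum_add_distrib, ← Finset.sum_mul, ← Finset.sum_mul]
  rfl
  
lemma half (hodd : ringChar F ≠ 2) (K S : MulChar F ℂ)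
    (hKφ : K * quadChar F ≠ 1) (hS2 : S * S ≠ 1) (hA2 : (S * K⁻¹) * (S * K⁻¹) ≠ 1) :
    jacobiSum S (quadChar F) * jacobiSum (S * K⁻¹) (quadChar F)
      = jacobiSum (S * S) ((S * S)⁻¹ * (K * K)) / jacobiSum (quadChar F) K⁻¹
        * jacobiSum (S * K⁻¹) (quadChar F * S⁻¹) ^ 2 := by
  set φ := quadChar F with hφ
  set A := S * K⁻¹ with hA
  have hφ2 : φ * φ = 1 := qc_sq
  have aux : ∀ B : MulChar F ℂ, B * B ≠ 1 → B * φ ≠ 1 := by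
    intro B hB h
    have : B = φ := by rw [hφ, ← qc_inv]; exact eq_inv_of_mul_eq_one_left h
    exact hB (by rw [this, hφ2])
  have hK' : φ * K⁻¹ ≠ 1 := by
    intro h
    apply hKφ
    have : φ = K := by rwa [mul_inv_eq_one] at h
    rw [← this, hφ2]
  have hψ := AddChar.FiniteField.primitiveChar_to_Complex_isPrimitive F
  set ψ := AddChar.FiniteField.primitiveChar_to_Complex F
  have G := g_ne hψ
  have hAS : A * (φ * S⁻¹) = φ * K⁻¹ := by
    rw [hA, mul_comm φ, ← mul_assoc, mul_right_comm S, mul_inv_cancel, one_mul, mul_comm]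
  have j1 := jacobiSum_mul_nontrivial (aux S hS2) ψ
  have j2 := jacobiSum_mul_nontrivial (aux A hA2) ψ
  have j3 := jacobiSum_mul_nontrivial hK' ψ
  have j4 := jacobiSum_mul_nontrivial (χ := A) (φ := φ * S⁻¹) (by rw [hAS]; exact hK') ψ
  rw [hAS] at j4
  have hSK : (S * S) * (K⁻¹ * K⁻¹) = A * A := mul_mul_mul_comm _ _ _ _
  have j5 := jacobiSum_mul_nontrivial (χ := S * S) (φ := K⁻¹ * K⁻¹) (by rw [hSK]; exact hA2) ψ
  rw [hSK] at j5
  have j6 : jacobiSum (S * S) ((S * S)⁻¹ * (K * K)) = jacobiSum (S * S) (K⁻¹ * K⁻¹) := by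
    rw [jac_inv, mul_inv_cancel_left, mul_inv, MulChar.mul_apply, ← map_mul]; simp
  have d1 := g_dup hodd hψ S
  have d2 := g_dup hodd hψ A
  have d3 := g_dup hodd hψ K⁻¹
  have r1 := g_refl hψ (aux S hS2)
  have r2 : (gaussSum φ ψ ^ 2) ^ 2 = (Fintype.card F : ℂ) ^ 2 := by
    have := g_refl hψ (qc_ne_one hodd)
    rw [qc_inv] at this
    rw [← this]; ring
  have hinv : (S * φ)⁻¹ = φ * S⁻¹ := by rw [mul_inv_rev, qc_inv]
  rw [hinv, ← r2] at r1
  have h4 : A 4 = S 4 * K⁻¹ 4 := MulChar.mul_apply _ _ _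
  have u4 : IsUnit (4 : F) := isUnit_iff_ne_zero.mpr (four_ne hodd)
  have nS : S 4 ≠ 0 := (u4.map S).ne_zero
  have nK : K⁻¹ 4 ≠ 0 := (u4.map K⁻¹).ne_zero
  rw [← hφ] at d1 d2 d3
  rw [mul_comm K⁻¹ φ] at d3
  rw [j6]
  rw [h4] at d2
  have G1 := G S
  have G2 := G A
  have G3 := G φ
  have G4 := G (φ * S⁻¹)
  have G5 := G (S * φ)
  have G6 := G (A * φ)
  have G7 := G (φ * K⁻¹)
  have G8 := G (S * S)
  have G9 := G (A * A)
  have G10 := G (K⁻¹ * K⁻¹)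
  have G11 := G K⁻¹
  have k1 : jacobiSum S φ = gaussSum S ψ * gaussSum φ ψ / gaussSum (S * φ) ψ := by
    rw [eq_div_iff G5, mul_comm, j1]
  have k2 : jacobiSum A φ = gaussSum A ψ * gaussSum φ ψ / gaussSum (A * φ) ψ := by
    rw [eq_div_iff G6, mul_comm, j2]
  have k3 : jacobiSum φ K⁻¹ = gaussSum φ ψ * gaussSum K⁻¹ ψ / gaussSum (φ * K⁻¹) ψ := by
    rw [eq_div_iff G7, mul_comm, j3]
  have k4 : jacobiSum A (φ * S⁻¹) = gaussSum A ψ * gaussSum (φ * S⁻¹) ψ / gaussSum (φ * K⁻¹) ψ := by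
    rw [eq_div_iff G7, mul_comm, j4]
  have k5 : jacobiSum (S * S) (K⁻¹ * K⁻¹)
      = gaussSum (S * S) ψ * gaussSum (K⁻¹ * K⁻¹) ψ / gaussSum (A * A) ψ := by
    rw [eq_div_iff G9, mul_comm, j5]
  have m1 : gaussSum (S * S) ψ = S 4 * (gaussSum S ψ * gaussSum (S * φ) ψ) / gaussSum φ ψ := by
    rw [eq_div_iff G3, d1]
  have m2 : gaussSum (A * A) ψ
      = S 4 * K⁻¹ 4 * (gaussSum A ψ * gaussSum (A * φ) ψ) / gaussSum φ ψ := by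
    rw [eq_div_iff G3, d2]
  have m3 : gaussSum (K⁻¹ * K⁻¹) ψ
      = K⁻¹ 4 * (gaussSum K⁻¹ ψ * gaussSum (φ * K⁻¹) ψ) / gaussSum φ ψ := by
    rw [eq_div_iff G3, d3]
  rw [k1, k2, k3, k4, k5, m1, m2, m3]
  clear k1 k2 k3 k4 k5 m1 m2 m3 d1 d2 d3 j1 j2 j3 j4 j5 j6
  generalize gaussSum S ψ = s at *
  generalize gaussSum A ψ = a at *
  generalize gaussSum φ ψ = f at *
  generalize gaussSum (φ * S⁻¹) ψ = fs at *
  generalize gaussSum (S * φ) ψ = sf at *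
  generalize gaussSum (A * φ) ψ = af at *
  generalize gaussSum (φ * K⁻¹) ψ = fk at *
  generalize gaussSum K⁻¹ ψ = k at *
  generalize S 4 = s4 at *
  generalize K⁻¹ 4 = k4 at *
  field_simp
  linear_combination -r1

end helpers2

/-- The Evans–Greene evaluation of `₃ℙ₂(φ,η,η̄;K,K̄;1)` when `ηK = S²` is a square. -/
theorem statement3 {F : Type*} [Field F] [Fintype F] [DecidableEq F]
    (hodd : ringChar F ≠ 2) (η K S : MulChar F ℂ)
    (hη : η ≠ 1) (hKφ : K * quadChar F ≠ 1) (hηK : η * K ≠ 1) (hηK' : η * K⁻¹ ≠ 1)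
    (hS : η * K = S ^ 2) :
    periodP (quadChar F) [(η, K), (η⁻¹, K⁻¹)] 1
      = jacobiSum (η * K) (η⁻¹ * K) / jacobiSum (quadChar F) K⁻¹
          * (jacobiSum (S * K⁻¹) (quadChar F * S⁻¹) ^ 2
              + jacobiSum (quadChar F * S * K⁻¹) S⁻¹ ^ 2) := by
  have hφ2 : quadChar F * quadChar F = 1 := qc_sq
  have hSS : S * S = η * K := by rw [hS, sq]
  have hSS' : (S * quadChar F) * (S * quadChar F) = η * K := by
    rw [mul_mul_mul_comm, hφ2, mul_one, hSS]
  have gA : ∀ B : MulChar F ℂ, B * B = η * K → (B * K⁻¹) * (B * K⁻¹) ≠ 1 := by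
    intro B hB
    rw [mul_mul_mul_comm, hB, mul_assoc, mul_inv_cancel_left]; exact hηK'
  have gB : (η * K)⁻¹ * (K * K) = η⁻¹ * K := by
    rw [mul_inv, mul_assoc, inv_mul_cancel_left]
  have e1 := half hodd K S hKφ (by rw [hSS]; exact hηK) (gA S hSS)
  have e2 := half hodd K (S * quadChar F) hKφ (by rw [hSS']; exact hηK) (gA _ hSS')
  rw [hSS, gB] at e1
  rw [hSS', gB] at e2
  have e3 : quadChar F * (S * quadChar F)⁻¹ = S⁻¹ := by
    rw [mul_inv_rev, mul_inv_cancel_left]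
  rw [e3] at e2
  rw [P_eq_T hodd η K hη hKφ, T_eq hodd η K S hS, e1, e2, mul_comm (quadChar F) S, mul_add]
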